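/- Let k be odd with k ∣ n. Then every bichromatic travelling salesman tour of the 2n chunked equidistant points on the circle has total length at least n·k + 2n + n/k (that is, n(k + 2 + 1/k)). -/

import Mathlib

/-- The cyclic successor of an index. -/
def nextIdx {m : ℕ} (i : Fin m) : Fin m := ⟨(i.val + 1) % m, Nat.mod_lt _ i.pos⟩

/-- Point `i` of the chunked configuration is red iff `⌊i/k⌋` is even
(the points form alternately colored chunks of `k` consecutive points). -/
def redPt (k : ℕ) {m : ℕ} (i : Fin m) : Bool := decide ((i.val / k) % 2 = 0)

/-- The length of the edge between points `i` and `j` of the `2n` equidistant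
points on the circle: one more than the hop distance along the circle. -/
def edgeLen (n : ℕ) (i j : Fin (2 * n)) : ℕ :=
  min (((j : ℕ) + 2 * n - (i : ℕ)) % (2 * n)) (((i : ℕ) + 2 * n - (j : ℕ)) % (2 * n)) + 1

/-- `v` is a bichromatic travelling salesman tour: a cyclic enumeration of all
`2n` points in which cyclically consecutive points have different colors. -/
def IsBichromaticTour (n k : ℕ) (v : Fin (2 * n) → Fin (2 * n)) : Prop :=
  Function.Bijective v ∧ ∀ i : Fin (2 * n), redPt k (v i) ≠ redPt k (v (nextIdx i))

/-- The total length of a tour. -/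
def tourLength (n : ℕ) (v : Fin (2 * n) → Fin (2 * n)) : ℕ :=
  ∑ i : Fin (2 * n), edgeLen n (v i) (v (nextIdx i))

/-!
An edge joining two different chunks leaves the first through one of its ends and enters the second
through one of its ends, so its length is at least the sum of the depths of its endpoints, where
the depth of a point is its position counted from the nearer end of its chunk. In a tour every
point is an endpoint of two edges, so the tour has length at least twice the sum of all depths,
and the depths within one chunk sum to `⌊(k + 1)² / 4⌋`.
-/

/-- The depth of the point `x` within its chunk of length `k`: its position, counted from `1`,
starting at the nearer end of the chunk. Counting from `1` makes the depths of the two endpoints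
of an edge between chunks add up to at most its length, which is one more than its hop distance. -/
def chunkDepth (k x : ℕ) : ℕ := min (x % k + 1) (k - x % k)

theorem chunkDepth_add_of_dvd {k N : ℕ} (hdvd : k ∣ N) (x : ℕ) :
    chunkDepth k (x + N) = chunkDepth k x := by
  obtain ⟨c, rfl⟩ := hdvd
  rw [chunkDepth, Nat.add_mul_mod_self_left, chunkDepth]

theorem chunkDepth_add_chunkDepth_le {k x y : ℕ} (h : x / k < y / k) :
    chunkDepth k x + chunkDepth k y ≤ y - x + 1 := by
  have hk : 0 < k := Nat.pos_of_ne_zero fun hk ↦ by simp [hk] at h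
  have hmod_x : x % k < k := Nat.mod_lt x hk
  have hdepth_x : chunkDepth k x ≤ k - x % k := min_le_right _ _
  have hdepth_y : chunkDepth k y ≤ y % k + 1 := min_le_left _ _
  have hchunk : k * (x / k) + k ≤ k * (y / k) := Nat.mul_le_mul_left k h
  have hx := Nat.div_add_mod x k
  have hy := Nat.div_add_mod y k
  omega

theorem chunkDepth_add_chunkDepth_le_mod {k N x y : ℕ} (hdvd : k ∣ N) (hx : x < N) (hy : y < N)
    (h : x / k ≠ y / k) :
    chunkDepth k x + chunkDepth k y ≤ (y + N - x) % N + 1 := by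
  rcases h.lt_or_gt with hlt | hgt
  · have hxy : x < y := Nat.lt_of_div_lt_div hlt
    have hmod : (y + N - x) % N = y - x := by
      rw [Nat.sub_add_comm hxy.le, Nat.add_mod_right, Nat.mod_eq_of_lt (by omega)]
    rw [hmod]
    exact chunkDepth_add_chunkDepth_le hlt
  · -- The clockwise arc from `x` to `y` passes `0`, so it is the interval from `x` to `y + N`.
    have hyx : y < x := Nat.lt_of_div_lt_div hgt
    have hlt : x / k < (y + N) / k :=
      (Nat.div_lt_div_of_lt_of_dvd hdvd hx).trans_le (Nat.div_le_div_right (Nat.le_add_left N y))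
    rw [Nat.mod_eq_of_lt (by omega), ← chunkDepth_add_of_dvd hdvd y]
    exact chunkDepth_add_chunkDepth_le hlt

theorem chunkDepth_add_chunkDepth_le_edgeLen {n k : ℕ} (hdvd : k ∣ 2 * n) {i j : Fin (2 * n)}
    (h : i.val / k ≠ j.val / k) :
    chunkDepth k i + chunkDepth k j ≤ edgeLen n i j := by
  rw [edgeLen, ← min_add_add_right]
  refine le_min (chunkDepth_add_chunkDepth_le_mod hdvd i.isLt j.isLt h) ?_
  rw [add_comm (chunkDepth k i)]
  exact chunkDepth_add_chunkDepth_le_mod hdvd j.isLt i.isLt h.symm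

theorem sum_range_min_succ_sub :
    ∀ k : ℕ, ∑ r ∈ Finset.range k, min (r + 1) (k - r) = (k + 1) ^ 2 / 4
  | 0 => rfl
  | 1 => rfl
  | k + 2 => by
    -- Removing both ends of a chunk lowers the depth of every other point by one.
    have hinner : ∀ r ∈ Finset.range k,
        min (r + 1 + 1) (k + 2 - (r + 1)) = min (r + 1) (k - r) + 1 := by
      intro r hr
      have := Finset.mem_range.mp hr
      omega
    calc ∑ r ∈ Finset.range (k + 2), min (r + 1) (k + 2 - r)
        = ∑ r ∈ Finset.range k, min (r + 1 + 1) (k + 2 - (r + 1)) + 1 + 1 := by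
          rw [Finset.sum_range_succ', Finset.sum_range_succ]
          congr 2
          omega
      _ = (k + 1) ^ 2 / 4 + (k + 2) := by
          rw [Finset.sum_congr rfl hinner, Finset.sum_add_distrib, sum_range_min_succ_sub k,
            Finset.sum_const, Finset.card_range, smul_eq_mul, mul_one]
          ring
      _ = (k + 2 + 1) ^ 2 / 4 := by
          rw [← Nat.add_mul_div_right _ _ (by norm_num : 0 < 4)]
          congr 1
          ring

theorem sum_range_mul_comp_mod {M : Type*} [AddCommMonoid M] (f : ℕ → M) (k c : ℕ) :
    ∑ x ∈ Finset.range (k * c), f (x % k) = c • ∑ r ∈ Finset.range k, f r := by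
  induction c with
  | zero => simp
  | succ c ih =>
    rw [Nat.mul_succ, Finset.sum_range_add, ih, succ_nsmul]
    congr 1
    refine Finset.sum_congr rfl fun r hr ↦ ?_
    rw [Nat.mul_add_mod, Nat.mod_eq_of_lt (Finset.mem_range.mp hr)]

theorem sum_range_chunkDepth {k N : ℕ} (hk : 0 < k) (hdvd : k ∣ N) :
    ∑ x ∈ Finset.range N, chunkDepth k x = N / k * ((k + 1) ^ 2 / 4) := by
  obtain ⟨c, rfl⟩ := hdvd
  rw [Nat.mul_div_cancel_left c hk, ← sum_range_min_succ_sub, ← smul_eq_mul]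
  exact sum_range_mul_comp_mod (fun r ↦ min (r + 1) (k - r)) k c

theorem sum_chunkDepth_comp {ι : Type*} [Fintype ι] {N k : ℕ} (hk : 0 < k) (hdvd : k ∣ N)
    {u : ι → Fin N} (hu : Function.Bijective u) :
    ∑ i, chunkDepth k (u i) = N / k * ((k + 1) ^ 2 / 4) := by
  rw [hu.sum_comp fun x : Fin N ↦ chunkDepth k x, Fin.sum_univ_eq_sum_range (chunkDepth k),
    sum_range_chunkDepth hk hdvd]

theorem nextIdx_bijective {m : ℕ} : Function.Bijective (nextIdx : Fin m → Fin m) := by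
  refine Finite.injective_iff_bijective.mp fun a b h ↦ Fin.ext ?_
  have hmod : a.val ≡ b.val [MOD m] := Nat.ModEq.add_right_cancel' 1 (congrArg Fin.val h)
  exact hmod.eq_of_lt_of_lt a.isLt b.isLt

theorem div_ne_div_of_redPt_ne {k m : ℕ} {i j : Fin m} (h : redPt k i ≠ redPt k j) :
    i.val / k ≠ j.val / k :=
  fun hdiv ↦ h (by rw [redPt, redPt, hdiv])

theorem two_mul_div_mul_sq_div_four_of_odd {n k : ℕ} (hdvd : k ∣ n) (hko : Odd k) :
    2 * (2 * n / k * ((k + 1) ^ 2 / 4)) = n * k + 2 * n + n / k := by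
  obtain ⟨c, rfl⟩ := hdvd
  have hsq : (k + 1) ^ 2 / 4 * 4 = (k + 1) ^ 2 := by
    obtain ⟨m, rfl⟩ := hko
    exact Nat.div_mul_cancel ⟨(m + 1) ^ 2, by ring⟩
  rw [Nat.mul_left_comm 2 k c, Nat.mul_div_cancel_left _ hko.pos, Nat.mul_div_cancel_left _ hko.pos]
  linear_combination c * hsq

/-- Here `u i` and `v i` are the endpoints of the edge `i`, so the edges may form several
disjoint cycles; a single tour is the case `v = u ∘ nextIdx`. -/
theorem tsp_chunked_circle_odd_lower_general {ι : Type*} [Fintype ι] {n k : ℕ} (hk : 0 < k)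
    (hdvd : k ∣ 2 * n) {u v : ι → Fin (2 * n)} (hu : Function.Bijective u)
    (hv : Function.Bijective v) (huv : ∀ i, (u i).val / k ≠ (v i).val / k) :
    2 * (2 * n / k * ((k + 1) ^ 2 / 4)) ≤ ∑ i, edgeLen n (u i) (v i) :=
  calc 2 * (2 * n / k * ((k + 1) ^ 2 / 4))
      = ∑ i, (chunkDepth k (u i) + chunkDepth k (v i)) := by
        rw [Finset.sum_add_distrib, sum_chunkDepth_comp hk hdvd hu, sum_chunkDepth_comp hk hdvd hv,
          two_mul]
    _ ≤ ∑ i, edgeLen n (u i) (v i) :=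
        Finset.sum_le_sum fun i _ ↦ chunkDepth_add_chunkDepth_le_edgeLen hdvd (huv i)

/-- For odd chunk size `k` dividing `n`, every bichromatic travelling salesman
tour of the `2n` chunked equidistant points on the circle has total length at
least `n·k + 2n + n/k`. -/
theorem tsp_chunked_circle_odd_lower
    (n k : ℕ) (hn : 1 ≤ n) (hk : 1 ≤ k) (hdvd : k ∣ n) (hko : Odd k) :
    ∀ v : Fin (2 * n) → Fin (2 * n), IsBichromaticTour n k v →
      n * k + 2 * n + n / k ≤ tourLength n v := by
  intro v ⟨hbij, hcol⟩
  rw [← two_mul_div_mul_sq_div_four_of_odd hdvd hko]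
  exact tsp_chunked_circle_odd_lower_general hk (hdvd.mul_left 2) hbij
    (hbij.comp nextIdx_bijective) fun i ↦ div_ne_div_of_redPt_ne (hcol i)
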